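/- arXiv:1812.03268 — 2 statements merged into one kernel-verified Lean document; each statement's English description precedes it below -/
import Mathlib

section
/- With the bosonic Fock space V and normal-ordered modes as defined (n ≥ 2), define for 1 ≤ i, j ≤ n−1 and k, l ∈ ℤ the operators A_i(k) := :eps_i eps_i*:(k) − :eps_{i+1} eps_{i+1}*:(k) − :epsb_i epsb_i*:(k) + :epsb_{i+1} epsb_{i+1}*:(k) and X_j(l) := :eps_j eps_{j+1}*:(l) + :epsb_{j+1} epsb_j*:(l). Then for all 1 ≤ i, j ≤ n−1 and all k, l ∈ ℤ, [A_i(k), X_j(l)] = (2δ_{ij} − δ_{i,j+1} − δ_{i+1,j})·X_j(k+l). -/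
/-!
Write `E_{st}(k) = :s t*:(k)` for symbols `s, t ∈ S`.  The theorem is an instance of the relation
`[E_{rr}(k), E_{st}(l)] = (δ_{rs} - δ_{rt}) E_{st}(k+l)` for `s ≠ t` (`NO_comm`): both summands
`E_{eps_j, eps_{j+1}}` and `E_{epsb_{j+1}, epsb_j}` of `X_j` are eigenvectors of `A_i` with the same
eigenvalue `2δ_{ij} - δ_{i,j+1} - δ_{i+1,j}`.

The relation follows from the canonical commutation relations (`opOf_comm`).  On a fixed polynomial
a normal-ordered mode is a finite sum of its summands (`nterm_finite`, `NO_apply`), and normal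
ordering changes each summand by a scalar only, so the Leibniz rule gives the commutator of
`E_{rr}(k)` with a single mode: `[E_{rr}(k), s(j)] = δ_{rs} s(k+j)` and
`[E_{rr}(k), t*(j)] = -δ_{rt} t*(k+j)` (`NO_opOf_comm`).  For `s ≠ t` the modes of `s` and `t*`
commute, so `E_{st}(l)` is the sum of the plain products `s(j) t*(l-j)`; applying the Leibniz rule
again and shifting the summation index by `k` in the first term gives the result without a
central term.
-/

noncomputable section

open MvPolynomial

/-- The index set `S` of bosonic symbols: `c`, `eps_1, …, eps_{n+2}`, `epsb_1, …, epsb_{n+2}`.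
We index `eps_i` (resp. `epsb_i`) for `1 ≤ i ≤ n+2` by `Fin (n+2)` via `i-1`. -/
abbrev BSym (n : ℕ) := Unit ⊕ (Fin (n+2) ⊕ Fin (n+2))

/-- `W n` is the ℂ-span of `S ∪ S*`; `Sum.inl` indexes `S`, `Sum.inr` indexes `S*`. -/
abbrev W (n : ℕ) := (BSym n ⊕ BSym n) → ℂ

/-- the symbol `c` -/
def cSym (n : ℕ) : BSym n := Sum.inl ()
/-- the symbol `eps_i`, `1 ≤ i ≤ n+2` (indexed by `i-1 : Fin (n+2)`) -/
def epsSym (n : ℕ) (i : Fin (n+2)) : BSym n := Sum.inr (Sum.inl i)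
/-- the symbol `epsb_i`, `1 ≤ i ≤ n+2` (indexed by `i-1 : Fin (n+2)`) -/
def epsbSym (n : ℕ) (i : Fin (n+2)) : BSym n := Sum.inr (Sum.inr i)

/-- a plain (unstarred) symbol, as an element of the span `W n` of `S ∪ S*` -/
def pl {n : ℕ} (s : BSym n) : W n := Pi.single (Sum.inl s) 1
/-- a starred symbol, as an element of the span `W n` of `S ∪ S*` -/
def st {n : ℕ} (s : BSym n) : W n := Pi.single (Sum.inr s) 1

/-- embed the span of `S` into `W n` (the identity of the span of `S`) -/
def plV {n : ℕ} (u : BSym n → ℂ) : W n := Sum.elim u 0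
/-- the ℂ-linear star map from the span of `S` to `W n` -/
def stV {n : ℕ} (u : BSym n → ℂ) : W n := Sum.elim 0 u

/-- The symmetric bilinear form `(·|·)` on the span of `S`:
`(eps_a|eps_b) = (epsb_a|epsb_b) = δ_{ab}` and all other pairs (including `c`) pair to `0`. -/
def symForm {n : ℕ} (u v : BSym n → ℂ) : ℂ :=
  ∑ i : Fin (n+2), (u (epsSym n i) * v (epsSym n i) + u (epsbSym n i) * v (epsbSym n i))

/-- weight used to define the antisymmetric pairing -/
def wt {n : ℕ} : BSym n → ℂ := Sum.elim (fun _ => 0) (fun _ => 1)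

/-- The antisymmetric pairing `⟨·,·⟩` on `W n`:
`⟨u, v*⟩ = −(u|v) = −⟨v*, u⟩`, `⟨u, v⟩ = ⟨u*, v*⟩ = 0` for `u, v` in the span of `S`. -/
def pair {n : ℕ} (U V : W n) : ℂ :=
  ∑ s : BSym n, wt s * (U (Sum.inr s) * V (Sum.inl s) - U (Sum.inl s) * V (Sum.inr s))

/-- The bosonic Fock space: a polynomial algebra in variables `x_{u,j}`,
`u ∈ S ∪ S*`, `j ∈ ℤ+1/2`, `j > 0`; the positive half-integer `j = k + 1/2` is
represented by `k : ℕ`. -/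
abbrev Fock (n : ℕ) := MvPolynomial ((BSym n ⊕ BSym n) × ℕ) ℂ

/-- The operator `u(j)` for a basis symbol `u ∈ S ∪ S*` and half-integer `j = m + 1/2`
(`m : ℤ`): for `j < 0`, multiplication by `x_{u,-j}`; for `j > 0`,
`u(j) = -∂/∂x_{u*,j}` (`u ∈ S`) and `u*(j) = ∂/∂x_{u,j}` (`u ∈ S`). -/
def opOf {n : ℕ} (b : BSym n ⊕ BSym n) (m : ℤ) : Module.End ℂ (Fock n) :=
  if m < 0 then LinearMap.mulLeft ℂ (X (b, (-m-1).toNat))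
  else match b with
    | Sum.inl s => - (pderiv ((Sum.inr s : BSym n ⊕ BSym n), m.toNat)).toLinearMap
    | Sum.inr s => (pderiv ((Sum.inl s : BSym n ⊕ BSym n), m.toNat)).toLinearMap

/-- The operator `u(j)`, `j = m + 1/2`, for `u` in the span `W n` of `S ∪ S*`,
extended ℂ-linearly in `u`. -/
def op {n : ℕ} (u : W n) (m : ℤ) : Module.End ℂ (Fock n) :=
  ∑ b : BSym n ⊕ BSym n, u b • opOf b m

/-- The summand `:u(j) v(M−j):` of the normal-ordered mode, `j = m + 1/2`:
`u(j)v(M−j)` if `j < 0` and `v(M−j)u(j)` if `j > 0` (note `M - j = (M-m-1) + 1/2`). -/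
def nterm {n : ℕ} (u v : W n) (M m : ℤ) : Module.End ℂ (Fock n) :=
  if m < 0 then op u m * op v (M - m - 1) else op v (M - m - 1) * op u m

/-- The normal-ordered mode `:u v:(M) = Σ_{j ∈ ℤ+1/2} :u(j) v(M−j):`.  On each
polynomial only finitely many summands act nonzero; the resulting linear operator is
defined here by its (finite, via `finsum`) values on the monomial basis. -/
def NO {n : ℕ} (u v : W n) (M : ℤ) : Module.End ℂ (Fock n) :=
  (basisMonomials ((BSym n ⊕ BSym n) × ℕ) ℂ).constr ℂ
    (fun d => ∑ᶠ m : ℤ, nterm u v M m ((monomial d) (1 : ℂ)))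

/-- the symbol `eps_i` for `1 ≤ i ≤ n+2`, taking a natural-number index
(out-of-range indices are reduced mod `n+2`; all uses below are in range) -/
def epsN (n i : ℕ) : BSym n := epsSym n ⟨(i-1) % (n+2), Nat.mod_lt _ (by omega)⟩

/-- the symbol `epsb_i` for `1 ≤ i ≤ n+2`, taking a natural-number index
(out-of-range indices are reduced mod `n+2`; all uses below are in range) -/
def epsbN (n i : ℕ) : BSym n := epsbSym n ⟨(i-1) % (n+2), Nat.mod_lt _ (by omega)⟩

/-- the operator `A_i(k) := :eps_i eps_i*:(k) − :eps_{i+1} eps_{i+1}*:(k)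
− :epsb_i epsb_i*:(k) + :epsb_{i+1} epsb_{i+1}*:(k)`, `1 ≤ i ≤ n−1` -/
def Amode (n i : ℕ) (k : ℤ) : Module.End ℂ (Fock n) :=
  NO (pl (epsN n i)) (st (epsN n i)) k - NO (pl (epsN n (i+1))) (st (epsN n (i+1))) k
    - NO (pl (epsbN n i)) (st (epsbN n i)) k + NO (pl (epsbN n (i+1))) (st (epsbN n (i+1))) k

/-- the operator `X_j(l) := :eps_j eps_{j+1}*:(l) + :epsb_{j+1} epsb_j*:(l)`, `1 ≤ j ≤ n−1` -/
def Xmode (n j : ℕ) (l : ℤ) : Module.End ℂ (Fock n) :=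
  NO (pl (epsN n j)) (st (epsN n (j+1))) l + NO (pl (epsbN n (j+1))) (st (epsbN n j)) l

/-! ### Canonical commutation relations -/

/-- The sign in `u(j) = ± ∂/∂x_{u*,j}`: `-1` for `u ∈ S`, `+1` for `u ∈ S*`. -/
def sgn {n : ℕ} (b : BSym n ⊕ BSym n) : ℂ := Sum.elim (fun _ => -1) (fun _ => 1) b

/-- The value of the commutator of a mode of `b` with the opposite mode of `b'`: `-1` on `(u, u*)`,
`1` on `(u*, u)`, and `0` on all other pairs of symbols.  On basis vectors it differs from `pair`
only at the symbol `c`. -/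
def contr {n : ℕ} (b b' : BSym n ⊕ BSym n) : ℂ := if b' = b.swap then sgn b else 0

lemma opOf_neg {n : ℕ} (b : BSym n ⊕ BSym n) {m : ℤ} (hm : m < 0) (p : Fock n) :
    opOf b m p = X (b, (-m-1).toNat) * p := by
  simp [opOf, hm]

lemma opOf_nonneg {n : ℕ} (b : BSym n ⊕ BSym n) {m : ℤ} (hm : 0 ≤ m) (p : Fock n) :
    opOf b m p = sgn b • pderiv (b.swap, m.toNat) p := by
  rcases b with s | s <;> simp [opOf, not_lt.mpr hm, sgn]

lemma pderiv_pderiv_comm {σ : Type*} (a b : σ) (p : MvPolynomial σ ℂ) :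
    pderiv a (pderiv b p) = pderiv b (pderiv a p) := by
  classical
  have h : ⁅pderiv (R := ℂ) a, pderiv (R := ℂ) b⁆ = 0 := by
    apply MvPolynomial.derivation_ext
    intro i
    rw [Derivation.commutator_apply]
    simp only [pderiv_X, Pi.single_apply]
    split_ifs <;> simp
  have h2 := DFunLike.congr_fun h p
  simp only [Derivation.commutator_apply, Derivation.coe_zero, Pi.zero_apply] at h2
  exact sub_eq_zero.mp h2

/-- `[b(j), b'(j')] = contr b b' · δ_{j,-j'}` for basis symbols; with `j = m + 1/2`, `j' = m' + 1/2` the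
condition `j = -j'` reads `m + m' + 1 = 0`. -/
lemma opOf_comm {n : ℕ} (b b' : BSym n ⊕ BSym n) (m m' : ℤ) (p : Fock n) :
    opOf b m (opOf b' m' p) = opOf b' m' (opOf b m p)
      + (if m + m' + 1 = 0 then contr b b' else 0) • p := by
  rcases lt_or_ge m 0 with hm | hm <;> rcases lt_or_ge m' 0 with hm' | hm'
  · rw [if_neg (by omega)]
    simp only [opOf_neg _ hm, opOf_neg _ hm', zero_smul, add_zero]
    ring
  · simp only [opOf_neg _ hm, opOf_nonneg _ hm', pderiv_mul, pderiv_X, Pi.single_apply,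
      Prod.mk.injEq, contr]
    by_cases h : m + m' + 1 = 0
    · have e : (-m-1).toNat = m'.toNat := by omega
      by_cases hb : b' = b.swap
      · subst hb
        rcases b with s | s <;> simp [h, e, sgn]
      · have hb' : ¬ b = b'.swap := by
          rintro rfl; simp at hb
        simp [hb, hb']
    · have e : ¬ (-m-1).toNat = m'.toNat := by omega
      simp only [e, and_false, if_false, if_neg h]
      simp
  · simp only [opOf_neg _ hm', opOf_nonneg _ hm, pderiv_mul, pderiv_X, Pi.single_apply,
      Prod.mk.injEq, contr]
    by_cases h : m + m' + 1 = 0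
    · have e : (-m'-1).toNat = m.toNat := by omega
      by_cases hb : b' = b.swap
      · subst hb
        rcases b with s | s <;> simp [h, e, sgn] <;> ring
      · simp [hb]
    · have e : ¬ (-m'-1).toNat = m.toNat := by omega
      simp only [e, and_false, if_false, if_neg h]
      simp
  · rw [if_neg (by omega)]
    simp only [opOf_nonneg _ hm, opOf_nonneg _ hm', zero_smul, add_zero, Derivation.map_smul]
    rw [pderiv_pderiv_comm, smul_comm]

/-! ### Normal-ordered modes as locally finite sums -/

/-- Every polynomial involves finitely many variables, so high positive modes annihilate it. -/
lemma exists_opOf_eq_zero {n : ℕ} (p : Fock n) :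
    ∃ N : ℤ, 0 ≤ N ∧ ∀ (b : BSym n ⊕ BSym n) (m : ℤ), N ≤ m → opOf b m p = 0 := by
  classical
  refine ⟨((p.vars.sup Prod.snd : ℕ) : ℤ) + 1, by positivity, fun b m hm => ?_⟩
  rw [opOf_nonneg b (by omega), pderiv_eq_zero_of_notMem_vars, smul_zero]
  intro h
  have := Finset.le_sup (f := Prod.snd) h
  simp only at this
  omega

/-- The basis vector of `W n` attached to a symbol of `S ∪ S*`. -/
def bv {n : ℕ} (b : BSym n ⊕ BSym n) : W n := Pi.single b 1

lemma op_bv {n : ℕ} (b : BSym n ⊕ BSym n) (m : ℤ) : op (bv b) m = opOf b m := by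
  classical
  simp [op, bv, Pi.single_apply]

lemma nterm_bv {n : ℕ} (b b' : BSym n ⊕ BSym n) (M m : ℤ) (p : Fock n) :
    nterm (bv b) (bv b') M m p = if m < 0 then opOf b m (opOf b' (M - m - 1) p)
      else opOf b' (M - m - 1) (opOf b m p) := by
  simp only [nterm, op_bv]
  split_ifs <;> rfl

lemma nterm_finite {n : ℕ} (b b' : BSym n ⊕ BSym n) (M : ℤ) (p : Fock n) :
    (fun m => nterm (bv b) (bv b') M m p).HasFiniteSupport := by
  obtain ⟨N, hN, h⟩ := exists_opOf_eq_zero p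
  refine (Set.finite_Icc (M - N - 1) N).subset fun m hm => ?_
  by_contra hc
  apply hm
  simp only [Set.mem_Icc, not_and_or, not_le] at hc
  change nterm (bv b) (bv b') M m p = 0
  rw [nterm_bv]
  split_ifs with h0
  · rw [h b' _ (by omega), map_zero]
  · by_cases h1 : N ≤ m
    · rw [h b _ h1, map_zero]
    -- here `0 ≤ m < M - N - 1`: both modes are derivatives, and the one of the second symbol kills `p`
    · rw [opOf_comm, if_neg (by omega), h b' _ (by omega), map_zero, zero_smul, add_zero]

lemma NO_apply {n : ℕ} (b b' : BSym n ⊕ BSym n) (M : ℤ) (p : Fock n) :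
    NO (bv b) (bv b') M p = ∑ᶠ m : ℤ, nterm (bv b) (bv b') M m p := by
  let F : Module.End ℂ (Fock n) :=
    { toFun := fun p => ∑ᶠ m : ℤ, nterm (bv b) (bv b') M m p
      map_add' := fun p q => by
        simp only [map_add]
        exact finsum_add_distrib (nterm_finite b b' M p) (nterm_finite b b' M q)
      map_smul' := fun c p => by
        simp only [map_smul, RingHom.id_apply]
        exact (smul_finsum' c (nterm_finite b b' M p)).symm }
  have h : NO (bv b) (bv b') M = F := by
    apply (basisMonomials ((BSym n ⊕ BSym n) × ℕ) ℂ).ext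
    intro d
    rw [NO, Module.Basis.constr_basis]
    simp [F]
  rw [h]; rfl

/-! ### Commutators of quadratic modes -/

lemma finsum_ite_eq' {M : Type*} [AddCommMonoid M] (a : ℤ) (x : M) :
    (∑ᶠ m : ℤ, if m = a then x else 0) = x := by
  rw [finsum_eq_single _ a (fun m hm => if_neg hm), if_pos rfl]

lemma ite_finite {M : Type*} [AddCommMonoid M] (a : ℤ) (x : M) :
    (fun m : ℤ => if m = a then x else 0).HasFiniteSupport := by
  refine (Set.finite_singleton a).subset fun m hm => ?_
  by_contra hc
  exact hm (if_neg hc)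

lemma map_finite {n : ℕ} (T : Module.End ℂ (Fock n)) {f : ℤ → Fock n} (hf : f.HasFiniteSupport) :
    (fun m => T (f m)).HasFiniteSupport :=
  hf.subset (Function.support_comp_subset (map_zero T) f)

/-- Each summand of a normal-ordered mode differs from a product of two modes by a scalar, so its
commutator with a mode is given by the Leibniz rule. -/
lemma nterm_opOf_comm {n : ℕ} (b b' w : BSym n ⊕ BSym n) (k m m' : ℤ) (p : Fock n) :
    nterm (bv b) (bv b') k m' (opOf w m p) - opOf w m (nterm (bv b) (bv b') k m' p)
      = (if m' = k + m then contr b' w • opOf b (k + m) p else 0)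
        + (if m' = -m - 1 then contr b w • opOf b' (k + m) p else 0) := by
  have h1 := opOf_comm b' w (k - m' - 1) m
  have h2 := opOf_comm b w m' m
  have e1 : (k - m' - 1 + m + 1 = 0) ↔ m' = k + m := by omega
  have e2 : (m' + m + 1 = 0) ↔ m' = -m - 1 := by omega
  simp only [e1, e2] at h1 h2
  have c1 : (if m' = k + m then contr b' w else 0) • opOf b m' p
      = if m' = k + m then contr b' w • opOf b (k + m) p else 0 := by
    split_ifs with h
    · rw [h]
    · rw [zero_smul]
  have c2 : (if m' = -m - 1 then contr b w else 0) • opOf b' (k - m' - 1) p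
      = if m' = -m - 1 then contr b w • opOf b' (k + m) p else 0 := by
    split_ifs with h
    · rw [h]; congr 3; ring
    · rw [zero_smul]
  rw [← c1, ← c2, nterm_bv, nterm_bv]
  by_cases h0 : m' < 0
  · simp only [if_pos h0, h1, h2, map_add, map_smul]
    abel
  · simp only [if_neg h0, h1, h2, map_add, map_smul]
    abel

lemma NO_opOf_comm {n : ℕ} (b b' w : BSym n ⊕ BSym n) (k m : ℤ) (p : Fock n) :
    NO (bv b) (bv b') k (opOf w m p) = opOf w m (NO (bv b) (bv b') k p)
      + contr b' w • opOf b (k + m) p + contr b w • opOf b' (k + m) p := by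
  rw [add_assoc, ← sub_eq_iff_eq_add', NO_apply, NO_apply, map_finsum _ (nterm_finite b b' k p),
    ← finsum_sub_distrib (nterm_finite b b' k _)
      (map_finite (opOf w m) (nterm_finite b b' k p))]
  simp only [nterm_opOf_comm]
  rw [finsum_add_distrib (ite_finite _ _) (ite_finite _ _), finsum_ite_eq', finsum_ite_eq']

/-- For `s ≠ t` the modes of `s` and `t*` commute, so normal ordering is immaterial. -/
lemma nterm_of_ne {n : ℕ} {s t : BSym n} (hst : s ≠ t) (M m : ℤ) (p : Fock n) :
    nterm (bv (Sum.inl s)) (bv (Sum.inr t)) M m p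
      = opOf (Sum.inl s) m (opOf (Sum.inr t) (M - m - 1) p) := by
  rw [nterm_bv]
  split_ifs
  · rfl
  · rw [opOf_comm]
    simp [contr, hst]

/-- The relation `[E_{rr}(k), E_{st}(l)] = (δ_{rs} - δ_{rt}) E_{st}(k+l)` for `s ≠ t`, where
`E_{st}(k) = :s t*:(k)`.  There is no central term since `s ≠ t`. -/
lemma NO_comm {n : ℕ} (r : BSym n) {s t : BSym n} (hst : s ≠ t) (k l : ℤ) :
    NO (pl r) (st r) k * NO (pl s) (st t) l - NO (pl s) (st t) l * NO (pl r) (st r) k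
      = ((if r = s then 1 else 0) - (if r = t then 1 else 0) : ℂ) • NO (pl s) (st t) (k + l) := by
  change NO (bv (.inl r)) (bv (.inr r)) k * NO (bv (.inl s)) (bv (.inr t)) l
    - NO (bv (.inl s)) (bv (.inr t)) l * NO (bv (.inl r)) (bv (.inr r)) k
    = _ • NO (bv (.inl s)) (bv (.inr t)) (k + l)
  refine LinearMap.ext fun p => ?_
  set E := NO (bv (Sum.inl r : BSym n ⊕ BSym n)) (bv (.inr r)) k with hE
  have hfin := nterm_finite (Sum.inl s : BSym n ⊕ BSym n) (.inr t)
  -- the summands of `E_{st}(k+l)`, and their shift by `k`, which has the same total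
  let g : ℤ → Fock n := fun m => nterm (bv (.inl s)) (bv (.inr t)) (k + l) m p
  have hg : g.HasFiniteSupport := hfin _ p
  have hg' : (fun m => g (m + k)).HasFiniteSupport :=
    hg.preimage (f := fun m : ℤ => m + k) (add_left_injective k).injOn
  have hshift : ∑ᶠ m, g (m + k) = ∑ᶠ m, g m := finsum_comp_equiv (Equiv.addRight k)
  have hterm : ∀ m : ℤ, E (nterm (bv (.inl s)) (bv (.inr t)) l m p)
      - nterm (bv (.inl s)) (bv (.inr t)) l m (E p)
      = (if r = s then 1 else 0 : ℂ) • g (m + k) - (if r = t then 1 else 0 : ℂ) • g m := by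
    intro m
    simp only [g, nterm_of_ne hst]
    have i1 : k + l - (m + k) - 1 = l - m - 1 := by ring
    have i2 : k + (l - m - 1) = k + l - m - 1 := by ring
    rw [hE, NO_opOf_comm, NO_opOf_comm, i1, i2, add_comm m k]
    have c1 : contr (.inr r) (.inl s : BSym n ⊕ BSym n) = if r = s then 1 else 0 := by
      simp [contr, sgn, eq_comm]
    have c2 : contr (.inl r) (.inl s : BSym n ⊕ BSym n) = 0 := by simp [contr]
    have c3 : contr (.inr r) (.inr t : BSym n ⊕ BSym n) = 0 := by simp [contr]
    have c4 : contr (.inl r) (.inr t : BSym n ⊕ BSym n) = - if r = t then 1 else 0 := by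
      by_cases h : r = t
      · simp [contr, sgn, h]
      · simp [contr, h, Ne.symm h]
    rw [c1, c2, c3, c4]
    by_cases h1 : r = s
    · subst h1
      simp [hst]
    · by_cases h2 : r = t
      · subst h2
        simp [h1, sub_eq_add_neg]
      · simp [h1, h2]
  simp only [LinearMap.sub_apply, Module.End.mul_apply, LinearMap.smul_apply]
  rw [NO_apply (.inl s) (.inr t) l p, NO_apply (.inl s) (.inr t) l (E p),
    NO_apply (.inl s) (.inr t) (k + l) p, map_finsum _ (hfin l p),
    ← finsum_sub_distrib
      (map_finite E (hfin l p)) (hfin l (E p))]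
  simp only [hterm]
  rw [finsum_sub_distrib (f := fun m => (if r = s then 1 else 0 : ℂ) • g (m + k))
      (g := fun m => (if r = t then 1 else 0 : ℂ) • g m)
      (map_finite ((if r = s then 1 else 0 : ℂ) • LinearMap.id) hg')
      (map_finite ((if r = t then 1 else 0 : ℂ) • LinearMap.id) hg),
    ← smul_finsum' _ hg', ← smul_finsum' _ hg, hshift, sub_smul]

lemma epsN_inj {n i j : ℕ} (hi1 : 1 ≤ i) (hi : i ≤ n) (hj1 : 1 ≤ j) (hj : j ≤ n) :
    epsN n i = epsN n j ↔ i = j := by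
  simp only [epsN, epsSym, Sum.inr.injEq, Sum.inl.injEq, Fin.mk.injEq]
  rw [Nat.mod_eq_of_lt (by omega), Nat.mod_eq_of_lt (by omega)]
  omega

lemma epsbN_inj {n i j : ℕ} (hi1 : 1 ≤ i) (hi : i ≤ n) (hj1 : 1 ≤ j) (hj : j ≤ n) :
    epsbN n i = epsbN n j ↔ i = j := by
  simp only [epsbN, epsbSym, Sum.inr.injEq, Fin.mk.injEq]
  rw [Nat.mod_eq_of_lt (by omega), Nat.mod_eq_of_lt (by omega)]
  omega

lemma epsN_ne_epsbN (n i j : ℕ) : epsN n i ≠ epsbN n j := by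
  simp [epsN, epsbN, epsSym, epsbSym]

/-- `[A_i(k), X_j(l)] = (2δ_{ij} − δ_{i,j+1} − δ_{i+1,j}) X_j(k+l)`
for `1 ≤ i, j ≤ n−1`. -/
theorem bosonic_alpha_X_bracket (n : ℕ) (hn : 2 ≤ n) (i j : ℕ)
    (hi1 : 1 ≤ i) (hi2 : i ≤ n - 1) (hj1 : 1 ≤ j) (hj2 : j ≤ n - 1) (k l : ℤ) :
    Amode n i k * Xmode n j l - Xmode n j l * Amode n i k
      = (((if i = j then 2 else 0) - (if i = j + 1 then 1 else 0)
          - (if i + 1 = j then 1 else 0) : ℂ)) • Xmode n j (k + l) := by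
  have hs : epsN n j ≠ epsN n (j + 1) := by
    rw [Ne, epsN_inj hj1 (by omega) (by omega) (by omega)]; omega
  have ht : epsbN n (j + 1) ≠ epsbN n j := by
    rw [Ne, epsbN_inj (by omega) (by omega) (by omega) (by omega)]; omega
  have a1 := NO_comm (epsN n i) hs k l
  have a2 := NO_comm (epsN n (i + 1)) hs k l
  have a3 := NO_comm (epsbN n i) hs k l
  have a4 := NO_comm (epsbN n (i + 1)) hs k l
  have b1 := NO_comm (epsN n i) ht k l
  have b2 := NO_comm (epsN n (i + 1)) ht k l
  have b3 := NO_comm (epsbN n i) ht k l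
  have b4 := NO_comm (epsbN n (i + 1)) ht k l
  simp only [epsN_ne_epsbN, (epsN_ne_epsbN _ _ _).symm, if_false, sub_self, zero_smul]
    at a3 a4 b1 b2
  have e1 := epsN_inj (n := n) hi1 (by omega) hj1 (by omega)
  have e2 := epsN_inj (n := n) (j := j + 1) hi1 (by omega) (by omega) (by omega)
  have e3 := epsN_inj (n := n) (i := i + 1) (by omega) (by omega) hj1 (by omega)
  have e4 := epsN_inj (n := n) (i := i + 1) (j := j + 1) (by omega) (by omega) (by omega) (by omega)
  have f1 := epsbN_inj (n := n) hi1 (by omega) hj1 (by omega)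
  have f2 := epsbN_inj (n := n) (j := j + 1) hi1 (by omega) (by omega) (by omega)
  have f3 := epsbN_inj (n := n) (i := i + 1) (by omega) (by omega) hj1 (by omega)
  have f4 := epsbN_inj (n := n) (i := i + 1) (j := j + 1) (by omega) (by omega) (by omega)
    (by omega)
  simp only [e1, e2, e3, e4, f1, f2, f3, f4, add_left_inj] at a1 a2 b3 b4
  have key : Amode n i k * Xmode n j l - Xmode n j l * Amode n i k
      = ((if i = j then 1 else 0) - (if i = j + 1 then 1 else 0) : ℂ)
          • NO (pl (epsN n j)) (st (epsN n (j+1))) (k + l)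
        - ((if i + 1 = j then 1 else 0) - (if i = j then 1 else 0) : ℂ)
          • NO (pl (epsN n j)) (st (epsN n (j+1))) (k + l)
        - ((if i = j + 1 then 1 else 0) - (if i = j then 1 else 0) : ℂ)
          • NO (pl (epsbN n (j+1))) (st (epsbN n j)) (k + l)
        + ((if i = j then 1 else 0) - (if i + 1 = j then 1 else 0) : ℂ)
          • NO (pl (epsbN n (j+1))) (st (epsbN n j)) (k + l) := by
    rw [← a1, ← a2, ← b3, ← b4]
    simp only [Amode, Xmode, mul_add, add_mul, mul_sub, sub_mul, sub_eq_zero.mp a3,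
      sub_eq_zero.mp a4, sub_eq_zero.mp b1, sub_eq_zero.mp b2]
    abel
  rw [key, Xmode]
  split_ifs <;> module
end
end

section
/- With the bosonic Fock space V and normal-ordered modes as defined (n ≥ 2), define for k ∈ ℤ the operators X_n(k) := √2·(:eps_n eps_{n+1}*:(k) − :eps_{n+1} epsb_n*:(k)) and X_{n−1}(k) := :eps_{n−1} eps_n*:(k) + :epsb_n epsb_{n−1}*:(k). Then for all k₁, k₂, k₃, k₄ ∈ ℤ, the iterated commutator [X_n(k₄), [X_n(k₃), [X_n(k₂), X_{n−1}(k₁)]]] = 0. -/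
/-!
Every normal-ordered mode `:s t*:(M)` with `s ≠ t` acts by commutator on the oscillator modes
`u(j)` through the elementary matrix `E_{st}` (on the span of `S`, and contragrediently on that of `S*`),
shifting degrees by `M` (`NO_acts`). Hence `X_n(k)` and `X_{n-1}(k)` act through
`√2 (E_{eps_n, eps_{n+1}} - E_{eps_{n+1}, epsb_n})` and
`E_{eps_{n-1}, eps_n} + E_{epsb_n, epsb_{n-1}}`, and by the Jacobi identity the iterated commutator
acts through the corresponding iterated commutator of matrices, which vanishes by the `gl` relations
(`elemMap_lie`).

An operator commuting with all oscillator modes is a scalar (`scalar_of_central`), so the iterated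
commutator is a scalar. To see that this scalar is zero, take the charge operator `N` counting
`eps_{n-1}` minus `epsb_{n-1}` (`numDer_acts`). Modulo scalars `[N, X_n(k)] = 0` and
`[N, X_{n-1}(k)] = X_{n-1}(k)`; scalars disappear inside brackets, so `N` fixes the iterated
commutator under bracketing, while it kills scalars (`serre_of_acts`). The charge argument replaces
the computation of central terms from double contractions.
-/

noncomputable section

open MvPolynomial

/-- `X_n(k) := √2 (:eps_n eps_{n+1}*:(k) − :eps_{n+1} epsb_n*:(k))` -/
def XnMode (n : ℕ) (k : ℤ) : Module.End ℂ (Fock n) :=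
  (Real.sqrt 2 : ℂ) • (NO (pl (epsN n n)) (st (epsN n (n+1))) k
    - NO (pl (epsN n (n+1))) (st (epsbN n n)) k)

/-- `X_{n−1}(k) := :eps_{n−1} eps_n*:(k) + :epsb_n epsb_{n−1}*:(k)` -/
def Xn1Mode (n : ℕ) (k : ℤ) : Module.End ℂ (Fock n) :=
  NO (pl (epsN n (n-1))) (st (epsN n n)) k + NO (pl (epsbN n n)) (st (epsbN n (n-1))) k

/-- the commutator of two endomorphisms -/
def commE {n : ℕ} (A B : Module.End ℂ (Fock n)) : Module.End ℂ (Fock n) := A * B - B * A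

-- gives the endomorphism rings their commutator Lie bracket laws, which Mathlib keeps opt-in
attribute [local instance] LieRing.ofAssociativeRing

/-! ### Canonical commutation relations and Schur's lemma -/

/-- The value of `[b(j), b'(-j)]` on basis symbols. -/
def symPair {n : ℕ} : BSym n ⊕ BSym n → BSym n ⊕ BSym n → ℂ
  | Sum.inl s, Sum.inr t => if s = t then -1 else 0
  | Sum.inr s, Sum.inl t => if s = t then 1 else 0
  | _, _ => 0

lemma pderiv_comm_apply {σ : Type*} (i j : σ) (p : MvPolynomial σ ℂ) :
    pderiv i (pderiv j p) = pderiv j (pderiv i p) := by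
  classical
  have h : ⁅(pderiv i : Derivation ℂ (MvPolynomial σ ℂ) (MvPolynomial σ ℂ)),
      (pderiv j : Derivation ℂ (MvPolynomial σ ℂ) (MvPolynomial σ ℂ))⁆ = 0 := by
    apply MvPolynomial.derivation_ext
    intro k
    rw [Derivation.commutator_apply, pderiv_X, pderiv_X]
    simp only [Pi.single_apply]
    split_ifs <;> simp
  have := congrArg (fun D => D p) h
  simpa [Derivation.commutator_apply, sub_eq_zero] using this

/-- The canonical commutation relations; with `j = m + 1/2` and `j' = m' + 1/2` the condition
`j + j' = 0` reads `m + m' + 1 = 0`. -/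
lemma opOf_lie {n : ℕ} (b b' : BSym n ⊕ BSym n) (m m' : ℤ) :
    ⁅opOf b m, opOf b' m'⁆ =
      (if m + m' + 1 = 0 then symPair b b' else 0) • (1 : Module.End ℂ (Fock n)) := by
  classical
  apply LinearMap.ext
  intro p
  have e : ∀ a c : ℕ, ((a : ℤ) = c) ↔ a = c := fun a c => by omega
  rcases lt_or_ge m 0 with h | h <;> rcases lt_or_ge m' 0 with h' | h'
  · have : m + m' + 1 ≠ 0 := by omega
    simp [Ring.lie_def, opOf, h, h', this]
    ring
  · have h2 : (m + m' + 1 = 0) ↔ (-m-1).toNat = m'.toNat := by omega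
    rcases b with s | s <;> rcases b' with t | t <;>
      simp [Ring.lie_def, opOf, h, h'.not_gt, h2, symPair, Pi.single_apply, pderiv_X] <;>
      split_ifs <;> simp_all
  · have h2 : (m + m' + 1 = 0) ↔ (-m'-1).toNat = m.toNat := by omega
    rcases b with s | s <;> rcases b' with t | t <;>
      simp [Ring.lie_def, opOf, h', h.not_gt, h2, symPair, Pi.single_apply, pderiv_X] <;>
      split_ifs <;> simp_all
  · have : m + m' + 1 ≠ 0 := by omega
    rcases b with s | s <;> rcases b' with t | t <;>
      simp [Ring.lie_def, opOf, h'.not_gt, h.not_gt, this, pderiv_comm_apply]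

/-- Schur's lemma for the Fock space: commuting with multiplications makes `A` multiplication by
`A 1`, and commuting with derivatives makes `A 1` a constant. -/
lemma scalar_of_central {n : ℕ} (A : Module.End ℂ (Fock n))
    (hA : ∀ (b : BSym n ⊕ BSym n) (m : ℤ), ⁅A, opOf b m⁆ = 0) : ∃ z : ℂ, A = z • 1 := by
  have hX : ∀ i p, A (X i * p) = X i * A p := by
    rintro ⟨b, k⟩ p
    have := LinearMap.congr_fun (hA b (-(k:ℤ)-1)) p
    have h : -(k:ℤ) - 1 < 0 := by omega
    simpa [Ring.lie_def, opOf, h, sub_eq_zero] using this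
  have hD : ∀ i p, A (pderiv i p) = pderiv i (A p) := by
    rintro ⟨b, k⟩ p
    have hk : ¬ (k : ℤ) < 0 := by omega
    rcases b with s | s
    · have := LinearMap.congr_fun (hA (Sum.inr s) k) p
      simpa [Ring.lie_def, opOf, hk, sub_eq_zero] using this
    · have := LinearMap.congr_fun (hA (Sum.inl s) k) p
      simp [Ring.lie_def, opOf, hk] at this
      linear_combination -this
  have h1 : A 1 = C (coeff 0 (A 1)) := by
    ext d
    by_cases hd : d = 0
    · simp [hd]
    · obtain ⟨i, hi⟩ := Finsupp.ne_iff.mp hd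
      -- the coefficient of `d = d' + e_i` is visible in `∂_i (A 1) = A (∂_i 1) = 0`
      have h := congrArg (coeff (d - Finsupp.single i 1)) (hD i 1)
      have hle : Finsupp.single i 1 ≤ d := by
        rw [Finsupp.single_le_iff]
        exact Nat.one_le_iff_ne_zero.mpr hi
      rw [coeff_pderiv, tsub_add_cancel_of_le hle, pderiv_one, map_zero, coeff_zero] at h
      have hz : (((d - Finsupp.single i 1 : (BSym n ⊕ BSym n) × ℕ →₀ ℕ) i : ℕ) : ℂ) + 1 ≠ 0 := Nat.cast_add_one_ne_zero _
      rw [coeff_C, if_neg (Ne.symm hd)]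
      exact (mul_eq_zero.mp h.symm).resolve_right hz
  refine ⟨coeff 0 (A 1), LinearMap.ext fun p => ?_⟩
  induction p using MvPolynomial.induction_on with
  | C a =>
    have : (C a : Fock n) = a • 1 := by rw [smul_eq_C_mul, mul_one]
    rw [this, map_smul, h1]
    simp [smul_eq_C_mul, mul_comm]
  | add p q hp hq => rw [map_add, map_add, hp, hq]
  | mul_X p i hp =>
    rw [mul_comm, hX, hp]
    simp

/-! ### Operators acting linearly on the oscillator modes -/

lemma end_smul_lie {V : Type*} [AddCommGroup V] [Module ℂ V] (z : ℂ) (A B : Module.End ℂ V) :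
    ⁅z • A, B⁆ = z • ⁅A, B⁆ := by
  simp [Ring.lie_def, smul_sub]

lemma end_lie_smul {V : Type*} [AddCommGroup V] [Module ℂ V] (z : ℂ) (A B : Module.End ℂ V) :
    ⁅A, z • B⁆ = z • ⁅A, B⁆ := by
  simp [Ring.lie_def, smul_sub]

lemma op_single {n : ℕ} (b : BSym n ⊕ BSym n) (m : ℤ) :
    op (Pi.single b 1) m = opOf b m := by
  classical
  simp [op, Pi.single_apply]

lemma op_pl {n : ℕ} (s : BSym n) (m : ℤ) : op (pl s) m = opOf (Sum.inl s) m := op_single _ m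

lemma op_st {n : ℕ} (s : BSym n) (m : ℤ) : op (st s) m = opOf (Sum.inr s) m := op_single _ m

lemma op_add {n : ℕ} (u v : W n) (m : ℤ) : op (u + v) m = op u m + op v m := by
  simp [op, add_smul, Finset.sum_add_distrib]

lemma op_smul {n : ℕ} (z : ℂ) (u : W n) (m : ℤ) : op (z • u) m = z • op u m := by
  simp [op, mul_smul, Finset.smul_sum]

lemma op_sub {n : ℕ} (u v : W n) (m : ℤ) : op (u - v) m = op u m - op v m := by
  rw [sub_eq_add_neg, ← neg_one_smul ℂ v, op_add, op_smul]
  module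

/-- `A` acts on the oscillator modes through `φ` with degree shift `M`:
`[A, u(j)] = (φ u)(j + M)` for all `u` and `j`. -/
def Acts {n : ℕ} (A : Module.End ℂ (Fock n)) (φ : Module.End ℂ (W n)) (M : ℤ) : Prop :=
  ∀ (u : W n) (m : ℤ), ⁅A, op u m⁆ = op (φ u) (m + M)

/-- By linearity it suffices to check `Acts` on the basis symbols. -/
lemma acts_of_basis {n : ℕ} {A : Module.End ℂ (Fock n)} {φ : Module.End ℂ (W n)} {M : ℤ}
    (h : ∀ (b : BSym n ⊕ BSym n) (m : ℤ), ⁅A, opOf b m⁆ = op (φ (Pi.single b 1)) (m + M)) :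
    Acts A φ M := by
  classical
  intro u m
  have hu : u = ∑ b, u b • (Pi.single b 1 : W n) := by
    ext b
    simp [Finset.sum_apply, Pi.single_apply]
  let opL : ℤ → W n →ₗ[ℂ] Module.End ℂ (Fock n) := fun m =>
    { toFun := fun u => op u m
      map_add' := fun u v => op_add u v m
      map_smul' := fun z u => op_smul z u m }
  have key : op (φ u) (m + M) = ∑ b, u b • op (φ (Pi.single b 1)) (m + M) := by
    change opL (m + M) (φ u) = ∑ b, u b • opL (m + M) (φ (Pi.single b 1))
    conv_lhs => rw [hu]
    simp only [map_sum, map_smul]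
  rw [key, op, lie_sum]
  exact Finset.sum_congr rfl fun b _ => by rw [end_lie_smul, h]

lemma Acts.add {n : ℕ} {A B : Module.End ℂ (Fock n)} {φ ψ : Module.End ℂ (W n)} {M : ℤ}
    (hA : Acts A φ M) (hB : Acts B ψ M) : Acts (A + B) (φ + ψ) M := fun u m => by
  rw [add_lie, hA, hB, LinearMap.add_apply, op_add]

lemma Acts.sub {n : ℕ} {A B : Module.End ℂ (Fock n)} {φ ψ : Module.End ℂ (W n)} {M : ℤ}
    (hA : Acts A φ M) (hB : Acts B ψ M) : Acts (A - B) (φ - ψ) M := fun u m => by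
  rw [sub_lie, hA, hB, LinearMap.sub_apply, op_sub]

lemma Acts.smul {n : ℕ} {A : Module.End ℂ (Fock n)} {φ : Module.End ℂ (W n)} {M : ℤ}
    (z : ℂ) (hA : Acts A φ M) : Acts (z • A) (z • φ) M := fun u m => by
  rw [end_smul_lie, hA, LinearMap.smul_apply, op_smul]

/-- The Jacobi identity. -/
lemma Acts.lie {n : ℕ} {A B : Module.End ℂ (Fock n)} {φ ψ : Module.End ℂ (W n)} {M N : ℤ}
    (hA : Acts A φ M) (hB : Acts B ψ N) : Acts ⁅A, B⁆ ⁅φ, ψ⁆ (M + N) := fun u m => by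
  rw [lie_lie, hB, hA, hA, hB, Ring.lie_def φ ψ, LinearMap.sub_apply, op_sub,
    Module.End.mul_apply, Module.End.mul_apply]
  congr 2 <;> ring

lemma Acts.scalar {n : ℕ} {A : Module.End ℂ (Fock n)} {M : ℤ} (hA : Acts A 0 M) :
    ∃ z : ℂ, A = z • 1 :=
  scalar_of_central A fun b m => by
    rw [← op_single, hA]
    simp [op]

/-- The endomorphism `E_{st}` of `W n` given by `t ↦ s`, `s* ↦ -t*` and zero on the other basis
symbols; it is the linear map through which `:s t*:(M)` acts. -/
def elemMap {n : ℕ} (s t : BSym n) : Module.End ℂ (W n) :=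
  (LinearMap.proj (Sum.inl t)).smulRight (pl s) - (LinearMap.proj (Sum.inr s)).smulRight (st t)

lemma elemMap_apply {n : ℕ} (s t : BSym n) (u : W n) :
    elemMap s t u = u (Sum.inl t) • pl s - u (Sum.inr s) • st t := by
  simp [elemMap]

/-- The `gl` commutation relations `[E_{st}, E_{s't'}] = δ_{ts'} E_{st'} - δ_{st'} E_{s't}`. -/
lemma elemMap_lie {n : ℕ} (s t s' t' : BSym n) :
    ⁅elemMap s t, elemMap s' t'⁆ =
      (if t = s' then elemMap s t' else 0) - (if s = t' then elemMap s' t else 0) := by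
  classical
  apply LinearMap.ext
  intro u
  rw [Ring.lie_def, LinearMap.sub_apply, Module.End.mul_apply, Module.End.mul_apply]
  simp only [elemMap_apply, pl, st]
  have e1 : (s' = t) = (t = s') := propext eq_comm
  have e2 : (t' = s) = (s = t') := propext eq_comm
  by_cases h1 : t = s' <;> by_cases h2 : s = t' <;>
    simp [h1, h2, e1, e2, elemMap_apply, pl, st] <;>
    simp_all
  all_goals module

/-! ### Charge operators -/

/-- Weights with respect to the symbol `s`: `s` has weight `1`, `s*` has weight `-1`, every other
basis symbol has weight `0`. -/
def symWt {n : ℕ} (s : BSym n) : BSym n ⊕ BSym n → ℂ :=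
  Sum.elim (fun t => if t = s then 1 else 0) (fun t => if t = s then -1 else 0)

/-- The charge derivation `x_{u,j} ↦ (weight of u) x_{u,j}` counting `s` minus `s*`. It plays the
role of `:s s*:(0)`. -/
def numDer {n : ℕ} (s : BSym n) : Derivation ℂ (Fock n) (Fock n) :=
  mkDerivation ℂ fun i => symWt s i.1 • (X i : Fock n)

lemma numDer_pderiv {n : ℕ} (s : BSym n) (b : BSym n ⊕ BSym n) (k : ℕ) (p : Fock n) :
    numDer s (pderiv (b, k) p) - pderiv (b, k) (numDer s p) = -(symWt s b • pderiv (b, k) p) := by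
  classical
  have h : ⁅numDer s, (pderiv (b, k) : Derivation ℂ (Fock n) (Fock n))⁆ =
      -(symWt s b • (pderiv (b, k) : Derivation ℂ (Fock n) (Fock n))) := by
    apply MvPolynomial.derivation_ext
    intro i
    rw [Derivation.commutator_apply, Derivation.neg_apply, Derivation.smul_apply, numDer,
      mkDerivation_X, Derivation.map_smul, pderiv_X]
    by_cases hi : i = (b, k)
    · subst hi
      simp
    · simp [hi]
  have := congrArg (fun D : Derivation ℂ (Fock n) (Fock n) => D p) h
  simpa [Derivation.commutator_apply] using this

lemma numDer_acts {n : ℕ} (s : BSym n) :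
    Acts (numDer s : Module.End ℂ (Fock n)) (elemMap s s) 0 := by
  classical
  apply acts_of_basis
  intro b m
  have hF : elemMap s s (Pi.single b 1) = symWt s b • (Pi.single b 1 : W n) := by
    rw [elemMap_apply]
    rcases b with t | t <;> by_cases h : s = t <;> simp [symWt, pl, st, h, eq_comm]
  rw [hF, op_smul, op_single, add_zero]
  apply LinearMap.ext
  intro p
  rcases lt_or_ge m 0 with hm | hm
  · simp [Ring.lie_def, opOf, hm, numDer, mul_comm]
  · have h1 : ∀ t, symWt s (Sum.inl t) = -symWt s (Sum.inr t) := fun t => by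
      simp only [symWt, Sum.elim_inl, Sum.elim_inr]
      split_ifs <;> simp
    rcases b with t | t
    · have := numDer_pderiv s (Sum.inr t) m.toNat p
      simp only [Ring.lie_def, opOf, hm.not_gt, h1, if_false, LinearMap.sub_apply,
        Module.End.mul_apply, LinearMap.neg_apply, map_neg, LinearMap.smul_apply,
        Derivation.coeFn_coe]
      rw [smul_neg, neg_smul, neg_neg, sub_neg_eq_add, neg_add_eq_sub, ← neg_sub, this, neg_neg]
    · have := numDer_pderiv s (Sum.inl t) m.toNat p
      simp only [Ring.lie_def, opOf, hm.not_gt, if_false, LinearMap.sub_apply,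
        Module.End.mul_apply, LinearMap.smul_apply, Derivation.coeFn_coe]
      rw [this, h1, neg_smul, neg_neg]

/-! ### Normal-ordered modes -/

/-- A polynomial involves finitely many variables, so high modes annihilate it. -/
lemma opOf_eventually_zero {n : ℕ} (b : BSym n ⊕ BSym n) (p : Fock n) :
    ∃ K : ℤ, ∀ m ≥ K, opOf b m p = 0 := by
  classical
  obtain ⟨K, hK⟩ : ∃ K : ℕ, ∀ i ∈ p.vars, i.2 < K :=
    ⟨p.vars.sup (fun i => i.2) + 1, fun i hi => Nat.lt_succ_of_le
      (Finset.le_sup (f := fun i : (BSym n ⊕ BSym n) × ℕ => i.2) hi)⟩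
  refine ⟨K, fun m hm => ?_⟩
  have hm0 : ¬ m < 0 := by omega
  have hd : ∀ b', pderiv (b', m.toNat) p = 0 := fun b' =>
    pderiv_eq_zero_of_notMem_vars fun h => by
      have := hK _ h
      simp only at this
      omega
  rcases b with s | s <;> simp [opOf, hm0, hd]

lemma opOf_comm_of_ne {n : ℕ} {s t : BSym n} (hst : s ≠ t) (m m' : ℤ) :
    opOf (Sum.inl s) m * opOf (Sum.inr t) m' = opOf (Sum.inr t) m' * opOf (Sum.inl s) m := by
  rw [← sub_eq_zero, ← Ring.lie_def, opOf_lie]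
  simp [symPair, hst]

/-- For `s ≠ t` the two factors commute, so normal ordering is vacuous. -/
lemma nterm_eq {n : ℕ} {s t : BSym n} (hst : s ≠ t) (M m : ℤ) :
    nterm (pl s) (st t) M m = opOf (Sum.inl s) m * opOf (Sum.inr t) (M - m - 1) := by
  rw [nterm, op_pl, op_st, opOf_comm_of_ne hst, ite_self]

lemma nterm_eventually_zero {n : ℕ} {s t : BSym n} (hst : s ≠ t) (M : ℤ) (p : Fock n) :
    ∃ K : ℤ, ∀ m, m ∉ Finset.Icc (-K) K → nterm (pl s) (st t) M m p = 0 := by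
  obtain ⟨K₁, h₁⟩ := opOf_eventually_zero (Sum.inl s) p
  obtain ⟨K₂, h₂⟩ := opOf_eventually_zero (Sum.inr t) p
  refine ⟨max |K₁| (|K₂| + |M| + 1), fun m hm => ?_⟩
  rw [Finset.mem_Icc] at hm
  rw [nterm_eq hst]
  rcases le_or_gt K₁ m with hm1 | hm1
  · rw [opOf_comm_of_ne hst, Module.End.mul_apply, h₁ m hm1, map_zero]
  · have hm2 : M - m - 1 ≥ K₂ := by
      have := neg_abs_le M
      have := le_abs_self K₂
      have := le_abs_self K₁
      have := le_max_left |K₁| (|K₂| + |M| + 1)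
      have := le_max_right |K₁| (|K₂| + |M| + 1)
      by_contra hc
      exact hm ⟨by omega, by omega⟩
    rw [Module.End.mul_apply, h₂ _ hm2, map_zero]

/-- On a fixed polynomial the normal-ordered mode is any sufficiently large partial sum. -/
lemma NO_apply_s13 {n : ℕ} {s t : BSym n} (hst : s ≠ t) (M : ℤ) (p : Fock n) :
    ∀ᶠ K : ℤ in Filter.atTop, NO (pl s) (st t) M p =
      ∑ m ∈ Finset.Icc (-K) K, opOf (Sum.inl s) m (opOf (Sum.inr t) (M - m - 1) p) := by
  have hmon : ∀ d : ((BSym n ⊕ BSym n) × ℕ) →₀ ℕ,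
      ∀ᶠ K : ℤ in Filter.atTop, NO (pl s) (st t) M (monomial d 1) =
      ∑ m ∈ Finset.Icc (-K) K,
        opOf (Sum.inl s) m (opOf (Sum.inr t) (M - m - 1) (monomial d 1)) := by
    intro d
    obtain ⟨K₀, h⟩ := nterm_eventually_zero hst M (monomial d (1 : ℂ))
    filter_upwards [Filter.eventually_ge_atTop K₀] with K hK
    have e : (monomial d (1 : ℂ) : Fock n) = basisMonomials _ ℂ d := by
      rw [coe_basisMonomials]
    conv_lhs => rw [e, NO, Module.Basis.constr_basis]
    rw [finsum_eq_sum_of_support_subset (s := Finset.Icc (-K) K)]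
    · exact Finset.sum_congr rfl fun m _ => by rw [nterm_eq hst, Module.End.mul_apply]
    · intro m hm
      by_contra hc
      refine hm (h m fun h' => hc ?_)
      rw [Finset.mem_Icc] at h'
      rw [Finset.mem_coe, Finset.mem_Icc]
      omega
  induction p using MvPolynomial.induction_on' with
  | monomial d a =>
    filter_upwards [hmon d] with K hK
    have e : (monomial d a : Fock n) = a • monomial d 1 := by simp [smul_monomial]
    rw [e, map_smul, hK, Finset.smul_sum]
    simp only [map_smul]
  | add p q hp hq =>
    filter_upwards [hp, hq] with K h1 h2
    rw [map_add, h1, h2, ← Finset.sum_add_distrib]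
    simp only [map_add]

/-- The single-contraction (Wick) formula `[:s t*:(M), u(j)] = (E_{st} u)(j + M)`. -/
lemma NO_acts {n : ℕ} {s t : BSym n} (hst : s ≠ t) (M : ℤ) :
    Acts (NO (pl s) (st t) M) (elemMap s t) M := by
  classical
  apply acts_of_basis
  intro b m
  apply LinearMap.ext
  intro p
  obtain ⟨K, h1, h2, hK⟩ := ((NO_apply_s13 hst M p).and ((NO_apply_s13 hst M (opOf b m p)).and
    (Filter.eventually_ge_atTop (|M| + |m| + 1)))).exists
  have hterm : ∀ k : ℤ, opOf (Sum.inl s) k (opOf (Sum.inr t) (M - k - 1) (opOf b m p)) -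
      opOf b m (opOf (Sum.inl s) k (opOf (Sum.inr t) (M - k - 1) p)) =
      (if k = m + M then symPair (Sum.inr t) b • opOf (Sum.inl s) (m + M) p else 0) +
      (if k = -m - 1 then symPair (Sum.inl s) b • opOf (Sum.inr t) (m + M) p else 0) := by
    intro k
    have e1 := LinearMap.congr_fun (opOf_lie (Sum.inr t) b (M - k - 1) m) p
    have e2 := LinearMap.congr_fun (opOf_lie (Sum.inl s) b k m) (opOf (Sum.inr t) (M - k - 1) p)
    -- `[t*(·), b(j)]` is nonzero only for `k = m + M`, and `[s(·), b(j)]` only for `k = -m - 1`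
    have i1 : (M - k - 1 + m + 1 = 0) ↔ k = m + M := by omega
    have i2 : (k + m + 1 = 0) ↔ k = -m - 1 := by omega
    simp only [Ring.lie_def, LinearMap.sub_apply, Module.End.mul_apply, LinearMap.smul_apply,
      Module.End.one_apply, i1, i2, sub_eq_iff_eq_add] at e1 e2
    rw [e1, map_add, e2, map_smul]
    have i3 : k = -m - 1 → M - k - 1 = m + M := by omega
    by_cases c2 : k = -m - 1
    · rw [if_pos c2, if_pos c2, i3 c2]
      split_ifs with c1
      · rw [c1]; abel
      · simp
    · rw [if_neg c2, if_neg c2]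
      split_ifs with c1
      · rw [c1]; simp
      · simp
  have hm1 : m + M ∈ Finset.Icc (-K) K := by
    rw [Finset.mem_Icc]
    constructor <;> linarith [neg_abs_le M, neg_abs_le m, le_abs_self M, le_abs_self m]
  have hm2 : -m - 1 ∈ Finset.Icc (-K) K := by
    rw [Finset.mem_Icc]
    constructor <;> linarith [neg_abs_le m, le_abs_self m, abs_nonneg M]
  have hcomm : ⁅NO (pl s) (st t) M, opOf b m⁆ p =
      symPair (Sum.inr t) b • opOf (Sum.inl s) (m + M) p +
      symPair (Sum.inl s) b • opOf (Sum.inr t) (m + M) p := by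
    rw [Ring.lie_def, LinearMap.sub_apply, Module.End.mul_apply, Module.End.mul_apply, h1, h2,
      map_sum, ← Finset.sum_sub_distrib, Finset.sum_congr rfl fun k _ => hterm k,
      Finset.sum_add_distrib, Finset.sum_ite_eq', Finset.sum_ite_eq', if_pos hm1, if_pos hm2]
  rw [hcomm, elemMap_apply, op_sub, op_smul, op_smul, op_pl, op_st]
  rcases b with r | r <;> simp [symPair, Pi.single_apply, eq_comm] <;> split_ifs <;> simp

/-! ### The Serre relation -/

/-- The abstract argument. The iterated commutator is a scalar because `φX`, `φY` satisfy the Serre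
relation; bracketing with `N` multiplies it by `1`, since `[N, Xᵢ]` and `[N, Y] - Y` are scalars;
and bracketing with a scalar gives `0`. -/
lemma serre_of_acts {n : ℕ} {N Y X₂ X₃ X₄ : Module.End ℂ (Fock n)}
    {φN φY φX : Module.End ℂ (W n)} {k₁ k₂ k₃ k₄ : ℤ}
    (hN : Acts N φN 0) (hY : Acts Y φY k₁)
    (h₂ : Acts X₂ φX k₂) (h₃ : Acts X₃ φX k₃) (h₄ : Acts X₄ φX k₄)
    (hNX : ⁅φN, φX⁆ = 0) (hNY : ⁅φN, φY⁆ = φY)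
    (hS : ⁅φX, ⁅φX, ⁅φX, φY⁆⁆⁆ = 0) :
    ⁅X₄, ⁅X₃, ⁅X₂, Y⁆⁆⁆ = 0 := by
  -- `[N, X]` acts through `[φN, φX] = 0`
  have hc : ∀ {X : Module.End ℂ (Fock n)} {k : ℤ}, Acts X φX k → ∃ z : ℂ, ⁅N, X⁆ = z • 1 := by
    intro X k h
    have h' := hN.lie h
    rw [hNX] at h'
    exact h'.scalar
  obtain ⟨z₂, e₂⟩ := hc h₂
  obtain ⟨z₃, e₃⟩ := hc h₃
  obtain ⟨z₄, e₄⟩ := hc h₄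
  obtain ⟨z₁, e₁⟩ : ∃ z : ℂ, ⁅N, Y⁆ - Y = z • 1 := by
    have h' := hN.lie hY
    rw [hNY, zero_add] at h'
    have h'' := h'.sub hY
    rw [sub_self] at h''
    exact h''.scalar
  obtain ⟨z, e⟩ : ∃ z : ℂ, ⁅X₄, ⁅X₃, ⁅X₂, Y⁆⁆⁆ = z • 1 := by
    have h' := h₄.lie (h₃.lie (h₂.lie hY))
    rw [hS] at h'
    exact h'.scalar
  have l1 : ∀ (w : ℂ) (B : Module.End ℂ (Fock n)), ⁅w • (1 : Module.End ℂ (Fock n)), B⁆ = 0 := by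
    intro w B; simp [Ring.lie_def]
  have l2 : ∀ (w : ℂ) (B : Module.End ℂ (Fock n)), ⁅B, w • (1 : Module.End ℂ (Fock n))⁆ = 0 := by
    intro w B; simp [Ring.lie_def]
  have hw : ⁅N, ⁅X₄, ⁅X₃, ⁅X₂, Y⁆⁆⁆⁆ = ⁅X₄, ⁅X₃, ⁅X₂, Y⁆⁆⁆ := by
    rw [leibniz_lie N X₄, leibniz_lie N X₃, leibniz_lie N X₂, e₂, e₃, e₄,
      eq_add_of_sub_eq e₁]
    simp only [l1, l2, lie_add, zero_add]
  rw [← hw, e, l2]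

/-- Serre relation `(ad X(α_n))³ X(α_{n−1}) = 0`:
`[X_n(k₄), [X_n(k₃), [X_n(k₂), X_{n−1}(k₁)]]] = 0`. -/
theorem bosonic_serre (n : ℕ) (hn : 2 ≤ n) (k₁ k₂ k₃ k₄ : ℤ) :
    commE (XnMode n k₄) (commE (XnMode n k₃) (commE (XnMode n k₂) (Xn1Mode n k₁))) = 0 := by
  have m1 : (n - 1) % (n + 2) = n - 1 := Nat.mod_eq_of_lt (by omega)
  have m2 : (n - 1 - 1) % (n + 2) = n - 2 := by rw [Nat.mod_eq_of_lt] <;> omega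
  have d1 : epsN n n ≠ epsN n (n + 1) := by
    simp [epsN, epsSym, m1, Nat.mod_eq_of_lt (show n < n + 2 by omega)]; omega
  have d2 : epsN n (n + 1) ≠ epsbN n n := by simp [epsN, epsSym, epsbN, epsbSym]
  have d3 : epsN n (n - 1) ≠ epsN n n := by
    simp [epsN, epsSym, m1, m2]; omega
  have d4 : epsbN n n ≠ epsbN n (n - 1) := by
    simp [epsbN, epsbSym, m1, m2]; omega
  have d5 : epsN n (n - 1) ≠ epsN n (n + 1) := by
    simp [epsN, epsSym, m2, Nat.mod_eq_of_lt (show n < n + 2 by omega)]; omega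
  have d6 : ∀ i j, epsN n i ≠ epsbN n j := fun i j => by simp [epsN, epsSym, epsbN, epsbSym]
  have hX : ∀ k, Acts (XnMode n k) _ k := fun k =>
    Acts.smul (Real.sqrt 2 : ℂ) ((NO_acts d1 k).sub (NO_acts d2 k))
  have hY : Acts (Xn1Mode n k₁) _ k₁ := (NO_acts d3 k₁).add (NO_acts d4 k₁)
  -- the charge `#eps_{n-1} - #epsb_{n-1}`: both summands of `X_{n-1}` have charge `1`, `X_n` has `0`
  have hN := (numDer_acts (epsN n (n - 1))).sub (numDer_acts (epsbN n (n - 1)))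
  change ⁅XnMode n k₄, ⁅XnMode n k₃, ⁅XnMode n k₂, Xn1Mode n k₁⁆⁆⁆ = 0
  refine serre_of_acts hN hY (hX k₂) (hX k₃) (hX k₄) ?_ ?_ ?_ <;>
    simp [elemMap_lie, end_smul_lie, end_lie_smul, d1, d2, d3, d5, d6, d1.symm, d2.symm,
      d4.symm, d5.symm, fun i j => (d6 i j).symm]
end
end
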